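/- With F_j ∈ ℝ^{n×n} real symmetric, V ∈ ℝ^{n×p}, Λ real diagonal, f_j(λ̂_i) ∈ ℝ, V = Q[T; 0] a QR factorization with Q ∈ ℝ^{n×n} orthogonal, T̃_j = T f_j(Λ), R = Σ_{j=1}^k F_j V f_j(Λ), and B_2 ∈ ℝ^{(n−p)×p} the lower block of −Q^T R: the linear system Σ_{j=1}^k X_j T̃_j = B_2 in the unknowns X_j ∈ ℝ^{(n−p)×p} is consistent; equivalently, B_2 T̃† T̃ = B_2, where T̃ = [T̃_1; …; T̃_k] ∈ ℝ^{kp×p} and T̃† is its Moore–Penrose pseudoinverse. -/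

import Mathlib

open Matrix BigOperators

noncomputable section

/-- Frobenius norm of a real matrix. -/
def fnorm {ι κ : Type*} [Fintype ι] [Fintype κ] (A : Matrix ι κ ℝ) : ℝ :=
  Real.sqrt (∑ i, ∑ j, ‖A i j‖ ^ 2)

/-- The four Moore–Penrose conditions for real matrices. -/
def IsMoorePenrose {ι κ : Type*} [Fintype ι] [Fintype κ]
    (A : Matrix ι κ ℝ) (B : Matrix κ ι ℝ) : Prop :=
  A * B * A = A ∧ B * A * B = B ∧ (A * B)ᵀ = A * B ∧ (B * A)ᵀ = B * A

open scoped Classical in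
/-- The Moore–Penrose pseudoinverse (defined by choice; it always exists and is unique). -/
noncomputable def pinv {ι κ : Type*} [Fintype ι] [Fintype κ] (A : Matrix ι κ ℝ) :
    Matrix κ ι ℝ :=
  if h : ∃ B, IsMoorePenrose A B then h.choose else 0

/-!
For every `j`, `Qᵀ Fⱼ V fⱼ(Λ) = (Qᵀ Fⱼ Q) [T̃ⱼ; 0]`, and the lower block of this product is
`(Qᵀ Fⱼ Q)₂₁ T̃ⱼ`. Hence `Xⱼ = -(Qᵀ Fⱼ Q)₂₁` solves the system. Written with block matrices the
system is `[X₁ ⋯ X_k] T̃ = B₂`, and because `A A† A = A`, an equation `Y A = B` is solvable in `Y`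
exactly when `B A† A = B`.
-/

section MoorePenrose

variable {ι κ μ : Type*} [Fintype ι] [Fintype κ]

/- Since `0⁻¹ = 0`, the identity `x * x⁻¹ * x = x` holds on the whole spectrum, so the functional
calculus of `M` with `x ↦ x⁻¹` is the pseudoinverse even when `M` is singular. -/
theorem exists_isSymm_isMoorePenrose_of_isSymm {M : Matrix κ κ ℝ} (hM : M.IsSymm) :
    ∃ P : Matrix κ κ ℝ, P.IsSymm ∧ IsMoorePenrose M P := by
  classical
  have hsa : IsSelfAdjoint M := by
    rwa [IsSelfAdjoint, star_eq_conjTranspose, conjTranspose_eq_transpose_of_trivial]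
  have cfc_isSymm (g : ℝ → ℝ) : (cfc g M).IsSymm := by
    have h : IsSelfAdjoint (cfc g M) := cfc_predicate g M
    rwa [IsSelfAdjoint, star_eq_conjTranspose, conjTranspose_eq_transpose_of_trivial] at h
  have cfc_mul_cfc (g h : ℝ → ℝ) : cfc g M * cfc h M = cfc (fun x ↦ g x * h x) M :=
    (cfc_mul g h M (M.finite_real_spectrum.continuousOn g)
      (M.finite_real_spectrum.continuousOn h)).symm
  have hid : cfc (fun x : ℝ ↦ x) M = M := cfc_id' ℝ M
  have inv_mul_mul_inv (x : ℝ) : x⁻¹ * x * x⁻¹ = x⁻¹ := by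
    simpa only [inv_inv] using mul_inv_mul_cancel x⁻¹
  set P : Matrix κ κ ℝ := cfc (fun x : ℝ ↦ x⁻¹) M with hP
  have hMP : M * P = cfc (fun x : ℝ ↦ x * x⁻¹) M := by rw [← cfc_mul_cfc, hid]
  have hPM : P * M = cfc (fun x : ℝ ↦ x⁻¹ * x) M := by rw [← cfc_mul_cfc, hid]
  refine ⟨P, cfc_isSymm _, ?_, ?_, ?_, ?_⟩
  · calc M * P * M = cfc (fun x : ℝ ↦ x * x⁻¹ * x) M := by
          rw [hMP, ← cfc_mul_cfc _ fun x ↦ x, hid]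
      _ = M := by simp only [mul_inv_mul_cancel, hid]
  · calc P * M * P = cfc (fun x : ℝ ↦ x⁻¹ * x * x⁻¹) M := by rw [hPM, hP, cfc_mul_cfc]
      _ = P := by simp only [inv_mul_mul_inv, hP]
  · rw [hMP]
    exact cfc_isSymm _
  · rw [hPM]
    exact cfc_isSymm _

theorem transpose_mul_self_mul_right_inj (A : Matrix ι κ ℝ) {B C : Matrix κ μ ℝ} :
    Aᵀ * A * B = Aᵀ * A * C ↔ A * B = A * C := by
  rw [← sub_eq_zero, ← Matrix.mul_sub, ← conjTranspose_eq_transpose_of_trivial,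
    conjTranspose_mul_self_mul_eq_zero, Matrix.mul_sub, sub_eq_zero]

theorem IsMoorePenrose.of_transpose_mul_self {A : Matrix ι κ ℝ} {P : Matrix κ κ ℝ} (hP : P.IsSymm)
    (h : IsMoorePenrose (Aᵀ * A) P) : IsMoorePenrose A (P * Aᵀ) := by
  classical
  obtain ⟨hGPG, hPGP, -, hPG⟩ := h
  refine ⟨?_, ?_, ?_, ?_⟩
  · have h : A * (P * (Aᵀ * A)) = A * (1 : Matrix κ κ ℝ) := by
      rw [← transpose_mul_self_mul_right_inj, ← Matrix.mul_assoc, hGPG, Matrix.mul_one]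
    simpa only [Matrix.mul_assoc, Matrix.mul_one] using h
  · calc P * Aᵀ * A * (P * Aᵀ) = P * (Aᵀ * A) * P * Aᵀ := by simp only [Matrix.mul_assoc]
      _ = P * Aᵀ := by rw [hPGP]
  · simp only [transpose_mul, transpose_transpose, hP.eq, Matrix.mul_assoc]
  · rw [Matrix.mul_assoc, hPG]

theorem exists_isMoorePenrose (A : Matrix ι κ ℝ) : ∃ B, IsMoorePenrose A B := by
  obtain ⟨P, hPsymm, hP⟩ := exists_isSymm_isMoorePenrose_of_isSymm (M := Aᵀ * A) <| by
    rw [IsSymm, transpose_mul, transpose_transpose]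
  exact ⟨P * Aᵀ, .of_transpose_mul_self hPsymm hP⟩

theorem isMoorePenrose_pinv (A : Matrix ι κ ℝ) : IsMoorePenrose A (pinv A) := by
  have h := exists_isMoorePenrose A
  rw [pinv, dif_pos h]
  exact h.choose_spec

theorem exists_mul_eq_iff_mul_pinv_mul_eq {A : Matrix ι κ ℝ} {B : Matrix μ κ ℝ} :
    (∃ Y : Matrix μ ι ℝ, Y * A = B) ↔ B * pinv A * A = B := by
  refine ⟨?_, fun h ↦ ⟨B * pinv A, h⟩⟩
  rintro ⟨Y, rfl⟩
  calc Y * A * pinv A * A = Y * (A * pinv A * A) := by simp only [Matrix.mul_assoc]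
    _ = Y * A := by rw [(isMoorePenrose_pinv A).1]

end MoorePenrose

section Blocks

variable {ι l m n o q r s t α : Type*}

/-- The block column `[M₁; …; M_k]` of a family of matrices; the row index `(j, i)` is row `i` of
the block `M j`. -/
def blockCol (M : ι → Matrix m n α) : Matrix (ι × m) n α :=
  of fun ji t ↦ M ji.1 ji.2 t

/-- The block row `[X₁ ⋯ X_k]` of a family of matrices; the column index `(j, i)` is column `i` of
the block `X j`. -/
def blockRow (X : ι → Matrix q m α) : Matrix q (ι × m) α :=
  of fun t ji ↦ X ji.1 t ji.2

theorem blockRow_mul_blockCol [Fintype ι] [Fintype m] [NonUnitalNonAssocSemiring α]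
    (X : ι → Matrix q m α) (M : ι → Matrix m n α) :
    blockRow X * blockCol M = ∑ j, X j * M j := by
  ext i t
  simp only [blockRow, blockCol, mul_apply, of_apply, Matrix.sum_apply, Fintype.sum_prod_type]

theorem exists_sum_mul_eq_iff_exists_mul_blockCol_eq [Fintype ι] [Fintype m]
    [NonUnitalNonAssocSemiring α] {M : ι → Matrix m n α} {B : Matrix q n α} :
    (∃ X : ι → Matrix q m α, ∑ j, X j * M j = B) ↔ ∃ Y, Y * blockCol M = B := by
  simp only [← blockRow_mul_blockCol]
  exact ⟨fun ⟨X, hX⟩ ↦ ⟨blockRow X, hX⟩, fun ⟨Y, hY⟩ ↦ ⟨fun j ↦ of fun t i ↦ Y t (j, i), hY⟩⟩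

theorem toRows₂_mul_fromRows_zero [Fintype m] [Fintype o] [Semiring α]
    (G : Matrix (s ⊕ q) (m ⊕ o) α) (T : Matrix m n α) :
    (G * fromRows T (0 : Matrix o n α)).toRows₂ = G.toBlocks₂₁ * T := by
  rw [← fromBlocks_toBlocks G, fromBlocks_mul_fromRows, toRows₂_fromRows, toBlocks_fromBlocks₂₁,
    Matrix.mul_zero, add_zero]

theorem toRows₂_mul_sum_mul_fromRows_zero_mul [Fintype ι] [Fintype l] [Fintype m] [Fintype n]
    [Fintype o] [Fintype r] [Semiring α] (P : Matrix (s ⊕ q) n α) (F : ι → Matrix n r α)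
    (Q : Matrix r (m ⊕ o) α) (T : Matrix m l α) (D : ι → Matrix l t α) :
    (P * ∑ j, F j * (Q * fromRows T (0 : Matrix o l α)) * D j).toRows₂ =
      ∑ j, (P * F j * Q).toBlocks₂₁ * (T * D j) := by
  have hterm (j : ι) : P * (F j * (Q * fromRows T (0 : Matrix o l α)) * D j) =
      P * F j * Q * fromRows (T * D j) (0 : Matrix o t α) := by
    rw [← Matrix.zero_mul (D j), ← fromRows_mul]
    simp only [Matrix.mul_assoc]
  ext i c
  simp only [Matrix.mul_sum, hterm, toRows₂_apply, Matrix.sum_apply, ← toRows₂_mul_fromRows_zero]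

end Blocks

theorem symmetric_B2_equation_consistent_general {ι l m n o r : Type*} [Fintype ι] [Fintype l]
    [Fintype m] [Fintype n] [Fintype o] [Fintype r]
    (F : ι → Matrix n n ℝ) (D : ι → Matrix l r ℝ) (V : Matrix n l ℝ) (Q : Matrix n (m ⊕ o) ℝ)
    (T : Matrix m l ℝ) (hV : V = Q * fromRows T (0 : Matrix o l ℝ))
    (Tt : ι → Matrix m r ℝ) (hTt : ∀ j, Tt j = T * D j)
    (R : Matrix n r ℝ) (hR : R = ∑ j, F j * V * D j)
    (B2 : Matrix o r ℝ) (hB2 : B2 = -(Qᵀ * R).toRows₂) :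
    (∃ X : ι → Matrix o m ℝ, ∑ j, X j * Tt j = B2) ∧
      B2 * pinv (blockCol Tt) * blockCol Tt = B2 := by
  have hX : ∑ j, -(Qᵀ * F j * Q).toBlocks₂₁ * Tt j = B2 := by
    simp only [hB2, hR, hV, hTt, toRows₂_mul_sum_mul_fromRows_zero_mul, Matrix.neg_mul,
      Finset.sum_neg_distrib]
  have hsol : ∃ X : ι → Matrix o m ℝ, ∑ j, X j * Tt j = B2 := ⟨_, hX⟩
  exact ⟨hsol, exists_mul_eq_iff_mul_pinv_mul_eq.1
    (exists_sum_mul_eq_iff_exists_mul_blockCol_eq.1 hsol)⟩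

/-- Consistency of the `B₂` equation in the symmetric backward error construction: with
real symmetric `Fⱼ`, `V = Q [T; 0]`, `T̃ⱼ = T fⱼ(Λ)`, `R = ∑ⱼ Fⱼ V fⱼ(Λ)` and `B₂` the
lower block of `-Qᵀ R`, the linear system `∑ⱼ Xⱼ T̃ⱼ = B₂` is consistent; equivalently,
`B₂ T̃† T̃ = B₂`. -/
theorem symmetric_B2_equation_consistent (p q k : ℕ)
    (F : Fin k → Matrix (Fin p ⊕ Fin q) (Fin p ⊕ Fin q) ℝ)
    (hFsym : ∀ j, (F j)ᵀ = F j)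
    (f : Fin k → ℝ → ℝ) (lam : Fin p → ℝ)
    (V : Matrix (Fin p ⊕ Fin q) (Fin p) ℝ)
    (Q : Matrix (Fin p ⊕ Fin q) (Fin p ⊕ Fin q) ℝ) (hQ : Qᵀ * Q = 1)
    (T : Matrix (Fin p) (Fin p) ℝ)
    (hV : V = Q * Matrix.fromRows T 0)
    (Tt : Fin k → Matrix (Fin p) (Fin p) ℝ)
    (hTt : ∀ j, Tt j = T * Matrix.diagonal fun i => f j (lam i))
    (Ttil : Matrix (Fin k × Fin p) (Fin p) ℝ)
    (hTtil : ∀ j s t, Ttil (j, s) t = Tt j s t)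
    (R : Matrix (Fin p ⊕ Fin q) (Fin p) ℝ)
    (hR : R = ∑ j, F j * V * Matrix.diagonal fun i => f j (lam i))
    (B2 : Matrix (Fin q) (Fin p) ℝ) (hB2 : ∀ m t, B2 m t = -((Qᵀ * R) (Sum.inr m) t)) :
    (∃ X : Fin k → Matrix (Fin q) (Fin p) ℝ, (∑ j, X j * Tt j) = B2) ∧
    B2 * pinv Ttil * Ttil = B2 := by
  obtain rfl : Ttil = blockCol Tt := Matrix.ext fun js ↦ hTtil js.1 js.2
  -- In `hV`, `Q * fromRows T 0` elaborates to `CStarMatrix` multiplication, which unfolds to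
  -- `Matrix` multiplication.
  exact symmetric_B2_equation_consistent_general F _ V Q T hV Tt hTt R hR B2 (Matrix.ext hB2)
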